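/- arXiv:1508.07499 — 3 statements merged into one kernel-verified Lean document; each statement's English description precedes it below -/
import Mathlib

section
/- Let ℓ be a prime and let a_1,...,a_m, b_1,...,b_n be nonzero elements of the algebraic closure 𝔽̄_ℓ of 𝔽_ℓ. Suppose max{m,n} < ℓ and that for every integer k with 1 ≤ k ≤ max{m,n} one has a_1^k + ⋯ + a_m^k = b_1^k + ⋯ + b_n^k. Then the multisets {a_1,...,a_m} and {b_1,...,b_n} coincide (in particular m = n). -/
/-!
By Newton's identities, the first `N` power sums of a multiset determine its first `N` elementary
symmetric functions as soon as `N!` can be cancelled. Adjoining zeros does not change a power sum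
of positive degree, so both multisets may be padded with zeros to the common size `N`. By Vieta,
the padded multisets are then the roots of the same monic polynomial of degree `N`, hence equal,
and discarding zeros recovers the nonzero parts of the original multisets.
-/

open Finset Nat

variable {R : Type*}

/-- The `k`-th power sum of a multiset, the counterpart of `Multiset.esymm` for
`MvPolynomial.psum`. -/
def powerSum [CommSemiring R] (s : Multiset R) (k : ℕ) : R :=
  (s.map (· ^ k)).sum

theorem powerSum_map_univ [CommSemiring R] {ι : Type*} [Fintype ι] (f : ι → R) (k : ℕ) :
    powerSum (univ.val.map f) k = ∑ i, f i ^ k := by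
  simp only [powerSum, Multiset.map_map, Function.comp_def, sum_map_val]

theorem powerSum_add_replicate_zero [CommSemiring R] (s : Multiset R) (n : ℕ) {k : ℕ}
    (hk : k ≠ 0) : powerSum (s + Multiset.replicate n 0) k = powerSum s k := by
  simp [powerSum, hk]

section CommRing

variable [CommRing R] {s t : Multiset R}

theorem mul_esymm_eq_sum_esymm_mul_powerSum (s : Multiset R) (k : ℕ) :
    k * s.esymm k = (-1) ^ (k + 1) *
      ∑ p ∈ antidiagonal k with p.1 < k, (-1) ^ p.1 * s.esymm p.1 * powerSum s p.2 := by
  classical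
  have newton := congrArg (MvPolynomial.aeval fun x : s ↦ (x.1 : R))
    (MvPolynomial.mul_esymm_eq_sum s R k)
  have aeval_psum (j : ℕ) : MvPolynomial.aeval (fun x : s ↦ (x.1 : R))
      (MvPolynomial.psum s R j) = powerSum s j := by
    rw [MvPolynomial.psum, map_sum]
    simp only [map_pow, MvPolynomial.aeval_X, ← powerSum_map_univ, Multiset.map_univ_coe]
  simpa only [map_mul, map_sum, map_pow, map_neg, map_one, map_natCast, aeval_psum,
    MvPolynomial.aeval_esymm_eq_multiset_esymm, Multiset.map_univ_coe] using newton

theorem esymm_eq_of_powerSum_eq {N : ℕ} (hN : IsLeftRegular (N ! : R))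
    (h : ∀ k, 1 ≤ k → k ≤ N → powerSum s k = powerSum t k) {k : ℕ} (hk : k ≤ N) :
    s.esymm k = t.esymm k := by
  induction k using Nat.strong_induction_on with
  | _ k ih =>
    obtain rfl | hpos := Nat.eq_zero_or_pos k
    · simp [Multiset.esymm]
    obtain ⟨c, hc⟩ := Nat.dvd_factorial hpos hk
    have hreg : IsLeftRegular (k : R) := by
      rw [hc, mul_comm, Nat.cast_mul] at hN
      exact hN.of_mul
    refine hreg ?_
    simp only [mul_esymm_eq_sum_esymm_mul_powerSum]
    congr 1
    refine sum_congr rfl fun p hp ↦ ?_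
    rw [mem_filter, HasAntidiagonal.mem_antidiagonal] at hp
    rw [ih p.1 hp.2 (by lia), h p.2 (by lia) (by lia)]

variable [IsDomain R]

theorem eq_of_card_eq_of_esymm_eq (hcard : s.card = t.card)
    (h : ∀ k ≤ s.card, s.esymm k = t.esymm k) : s = t := by
  rw [← Polynomial.roots_multiset_prod_X_sub_C s, ← Polynomial.roots_multiset_prod_X_sub_C t,
    Multiset.prod_X_sub_X_eq_sum_esymm, Multiset.prod_X_sub_X_eq_sum_esymm, ← hcard]
  congr 1
  refine sum_congr rfl fun k hk ↦ ?_
  rw [h k (mem_range_succ_iff.mp hk)]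

theorem eq_of_card_eq_of_powerSum_eq (hcard : s.card = t.card) (hfact : (s.card ! : R) ≠ 0)
    (h : ∀ k, 1 ≤ k → k ≤ s.card → powerSum s k = powerSum t k) : s = t :=
  eq_of_card_eq_of_esymm_eq hcard fun _ ↦
    esymm_eq_of_powerSum_eq (IsRegular.of_ne_zero hfact).left h

theorem stmt_2_general [DecidableEq R] (hfact : ((max s.card t.card)! : R) ≠ 0)
    (h : ∀ k, 1 ≤ k → k ≤ max s.card t.card → powerSum s k = powerSum t k) :
    s.filter (· ≠ 0) = t.filter (· ≠ 0) := by
  set N := max s.card t.card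
  let pad (u : Multiset R) : Multiset R := u + Multiset.replicate (N - u.card) 0
  have card_pad {u : Multiset R} (hu : u.card ≤ N) : (pad u).card = N := by
    simp [pad, hu]
  have filter_pad (u : Multiset R) : (pad u).filter (· ≠ 0) = u.filter (· ≠ 0) := by
    simp [pad, Multiset.filter_eq_nil, Multiset.mem_replicate]
  have hs : (pad s).card = N := card_pad (le_max_left _ _)
  have ht : (pad t).card = N := card_pad (le_max_right _ _)
  have pad_eq : pad s = pad t := by
    refine eq_of_card_eq_of_powerSum_eq (hs.trans ht.symm) (by rwa [hs]) fun k hk hkN ↦ ?_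
    rw [powerSum_add_replicate_zero s _ (by lia), powerSum_add_replicate_zero t _ (by lia)]
    exact h k hk (hs ▸ hkN)
  rw [← filter_pad s, pad_eq, filter_pad t]

end CommRing

/-- Lemma 2.3: if `a₁,...,aₘ, b₁,...,bₙ` are nonzero elements of `𝔽̄_ℓ` with
`max m n < ℓ` and the power sums agree for `1 ≤ k ≤ max m n`, then the multisets
`{a₁,...,aₘ}` and `{b₁,...,bₙ}` coincide. -/
theorem stmt_2 (ℓ : ℕ) [Fact ℓ.Prime] (m n : ℕ)
    (a : Fin m → AlgebraicClosure (ZMod ℓ)) (b : Fin n → AlgebraicClosure (ZMod ℓ))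
    (ha : ∀ i, a i ≠ 0) (hb : ∀ j, b j ≠ 0)
    (hmn : max m n < ℓ)
    (hsum : ∀ k : ℕ, 1 ≤ k → k ≤ max m n →
      ∑ i, (a i) ^ k = ∑ j, (b j) ^ k) :
    Multiset.map a Finset.univ.val = Multiset.map b Finset.univ.val := by
  classical
  have hfact : ((max m n)! : AlgebraicClosure (ZMod ℓ)) ≠ 0 :=
    ((IsUnit.natCast_factorial_iff_of_charP ℓ).mpr hmn).ne_zero
  have hfilter := stmt_2_general (s := univ.val.map a) (t := univ.val.map b)
    (by simpa using hfact) (by simpa [powerSum_map_univ, -Fin.univ_val_map] using hsum)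
  rwa [Multiset.filter_eq_self.mpr (by simpa using ha),
    Multiset.filter_eq_self.mpr (by simpa using hb)] at hfilter
end

section
/- Let F be a field, G a finite group, H a normal subgroup of G such that the index [G:H] is nonzero as an element of F, and V a finite-dimensional F-linear representation of G. Then V is a semisimple representation of G if and only if its restriction to H is a semisimple representation of H. -/
/-!
If `H` has invertible index in `G`, averaging an `H`-equivariant projection over `G ⧸ H` yields a
`G`-equivariant one, so a subrepresentation complemented over `H` is complemented over `G`.

Conversely, `G` acts on the lattice of `H`-stable submodules with finite orbits, and the fixed
points of this action are the `G`-stable submodules. The socle is a fixed point, hence has a fixed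
complement `t`, and it remains to find an atom below every fixed `t ≠ ⊥`. The orbit of a nonzero
compact element below `t` has a compact fixed supremum `k ≤ t`. If `m` is maximal below `k`, then
the infimum of the orbit of `m` is fixed, so it has a complement, which meets `k` in a nonzero
element `x`. Being disjoint from a finite infimum of elements covered by `k`, `x` lies above an
atom.
-/

open Representation
open scoped MonoidAlgebra

section CompactElement

variable {α β : Type*}

theorem isCompactElement_map_orderIso [PartialOrder α] [PartialOrder β] (f : α ≃o β) {k : α}
    (hk : IsCompactElement k) : IsCompactElement (f k) := by
  intro s u hne hdir hlub hle
  obtain ⟨x, ⟨y, hy, rfl⟩, hx⟩ := hk (f.symm '' s) (f.symm u) (hne.image _)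
    (directedOn_image.2 (hdir.mono fun _ _ h => f.symm.monotone h)) (f.symm.isLUB_image'.2 hlub)
    (f.le_symm_apply.2 hle)
  exact ⟨y, hy, f.le_symm_apply.1 hx⟩

theorem isCompactElement_iSup_of_finite_range {ι : Sort*} [CompleteLattice α] {f : ι → α}
    (hf : ∀ i, IsCompactElement (f i)) (hfin : (Set.range f).Finite) :
    IsCompactElement (⨆ i, f i) := by
  rw [← sSup_range, ← hfin.coe_toFinset, ← Finset.sup_id_eq_sSup]
  refine CompleteLattice.isCompactElement_finsetSup _ fun x hx => ?_
  obtain ⟨i, rfl⟩ := hfin.mem_toFinset.1 hx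
  exact hf i

theorem exists_covBy_of_isCompactElement [CompleteLattice α] {k : α} (hk : IsCompactElement k)
    (hne : k ≠ ⊥) : ∃ m, m ⋖ k := by
  have := CompleteLattice.Iic_coatomic_of_compact_element hk
  obtain hbot | ⟨⟨m, hmk⟩, hm, -⟩ := eq_top_or_exists_le_coatom (⊥ : Set.Iic k)
  · exact absurd (congrArg Subtype.val hbot).symm hne
  · exact ⟨m, (covBy_iff_coatom_Iic hmk).2 hm⟩

end CompactElement

theorem exists_isAtom_le_of_disjoint_inf_covBy {α : Type*} [Lattice α] [BoundedOrder α]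
    [IsLowerModularLattice α] {k x : α} {s : Finset α} (hs : ∀ m ∈ s, m ⋖ k) (hxk : x ≤ k)
    (hx : x ≠ ⊥) (hxs : Disjoint x (s.inf id)) : ∃ a, IsAtom a ∧ a ≤ x := by
  classical
  induction s using Finset.induction_on with
  | empty => exact absurd (by simpa using hxs) hx
  | insert m s _ ih =>
    by_cases hdisj : Disjoint x (s.inf id)
    · exact ih (fun m' hm' => hs m' (Finset.mem_insert_of_mem hm')) hdisj
    · have hmk : m ⋖ k := hs m (Finset.mem_insert_self m s)
      set y := x ⊓ s.inf id
      have hmy : m ⊓ y = ⊥ := by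
        rw [inf_left_comm, ← id_eq m, ← Finset.inf_insert]
        exact hxs.eq_bot
      have hym : ¬ y ≤ m := fun h => hdisj (disjoint_iff.2 ((inf_eq_right.2 h).symm.trans hmy))
      have hsup : m ⊔ y = k :=
        (hmk.wcovBy.eq_or_eq le_sup_left (sup_le hmk.le (inf_le_left.trans hxk))).resolve_left
          fun h => hym (sup_eq_left.1 h)
      have hcov : m ⊓ y ⋖ y := inf_covBy_of_covBy_sup_left (hsup.symm ▸ hmk)
      exact ⟨y, bot_covBy_iff.1 (hmy ▸ hcov), inf_le_left⟩

theorem orderIso_map_sSup_isAtom {α β : Type*} [CompleteLattice α] [CompleteLattice β]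
    (f : α ≃o β) : f (sSup {a | IsAtom a}) = sSup {b | IsAtom b} := by
  rw [f.map_sSup_eq_sSup_symm_preimage]
  congr 1
  ext b
  exact f.symm.isAtom_iff b

/-- Conjugation by an order isomorphism `e : β ≃o α`, as a homomorphism between the groups of order
automorphisms. -/
def orderIsoConj {α β : Type*} [LE α] [LE β] (e : β ≃o α) : (β ≃o β) →* (α ≃o α) where
  toFun f := (e.symm.trans f).trans e
  map_one' := RelIso.ext e.apply_symm_apply
  map_mul' f f' := RelIso.ext fun a => congrArg (e ∘ f) (e.symm_apply_apply (f' (e.symm a))).symm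

theorem orderIsoConj_apply {α β : Type*} [LE α] [LE β] (e : β ≃o α) (f : β ≃o β) (a : α) :
    orderIsoConj e f a = e (f (e.symm a)) :=
  rfl

section LatticeAction

variable {Γ α : Type*} [Group Γ] [CompleteLattice α] (φ : Γ →* (α ≃o α))

theorem map_iSup_orbit (g : Γ) (a : α) : φ g (⨆ h, φ h a) = ⨆ h, φ h a := by
  rw [(φ g).map_iSup]
  exact (Equiv.mulLeft g).iSup_congr fun h => by
    rw [Equiv.coe_mulLeft, map_mul, RelIso.mul_apply]

theorem map_iInf_orbit (g : Γ) (a : α) : φ g (⨅ h, φ h a) = ⨅ h, φ h a := by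
  rw [(φ g).map_iInf]
  exact (Equiv.mulLeft g).iInf_congr fun h => by
    rw [Equiv.coe_mulLeft, map_mul, RelIso.mul_apply]

theorem le_iSup_orbit (a : α) : a ≤ ⨆ g, φ g a :=
  le_iSup_of_le 1 (by rw [map_one, RelIso.one_apply])

theorem iInf_orbit_le (a : α) : ⨅ g, φ g a ≤ a :=
  iInf_le_of_le 1 (by rw [map_one, RelIso.one_apply])

variable [IsCompactlyGenerated α] {φ}

theorem exists_isCompactElement_fixed_le (hfin : ∀ a, (Set.range fun g => φ g a).Finite) {t : α}
    (ht : ∀ g, φ g t = t) (hne : t ≠ ⊥) :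
    ∃ k, IsCompactElement k ∧ (∀ g, φ g k = k) ∧ k ≤ t ∧ k ≠ ⊥ := by
  obtain ⟨k, hk, hkt, hk0⟩ : ∃ k, IsCompactElement k ∧ k ≤ t ∧ ¬ k ≤ ⊥ := by
    by_contra! h
    exact hne (le_bot_iff.1 (le_iff_compact_le_imp.2 h))
  exact ⟨⨆ g, φ g k,
    isCompactElement_iSup_of_finite_range (fun g => isCompactElement_map_orderIso (φ g) hk)
      (hfin k),
    fun g => map_iSup_orbit φ g k,
    iSup_le fun g => ((φ g).monotone hkt).trans_eq (ht g),
    fun h => hk0 ((le_iSup_orbit φ k).trans_eq h)⟩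

variable [IsModularLattice α]

theorem exists_isAtom_le_of_fixed (hfin : ∀ a, (Set.range fun g => φ g a).Finite)
    (hcompl : ∀ a, (∀ g, φ g a = a) → IsComplemented a) {t : α} (ht : ∀ g, φ g t = t)
    (hne : t ≠ ⊥) : ∃ a, IsAtom a ∧ a ≤ t := by
  obtain ⟨k, hk, hkfix, hkt, hk0⟩ := exists_isCompactElement_fixed_le hfin ht hne
  obtain ⟨m, hmk⟩ := exists_covBy_of_isCompactElement hk hk0
  have horbit : ∀ g, φ g m ⋖ k := fun g => hkfix g ▸ (apply_covBy_apply_iff (φ g)).2 hmk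
  obtain ⟨c, hc⟩ := hcompl (⨅ g, φ g m) fun g => map_iInf_orbit φ g m
  have hnk : ⨅ g, φ g m < k := (iInf_orbit_le φ m).trans_lt hmk.lt
  have hck : c ⊓ k ≠ ⊥ := by
    intro h
    have hmod := sup_inf_assoc_of_le c hnk.le
    rw [hc.sup_eq_top, top_inf_eq, h, sup_bot_eq] at hmod
    exact hnk.ne' hmod
  have hinf : (hfin m).toFinset.inf id = ⨅ g, φ g m := by
    rw [Finset.inf_id_eq_sInf, (hfin m).coe_toFinset, sInf_range]
  obtain ⟨a, ha, hle⟩ := exists_isAtom_le_of_disjoint_inf_covBy (s := (hfin m).toFinset)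
    (by simpa only [Set.Finite.mem_toFinset, Set.forall_mem_range] using horbit) inf_le_right hck
    (hinf ▸ hc.symm.disjoint.mono_left inf_le_left)
  exact ⟨a, ha, hle.trans (inf_le_right.trans hkt)⟩

theorem complementedLattice_of_fixed_complemented
    (hfin : ∀ a, (Set.range fun g => φ g a).Finite)
    (hcompl : ∀ a, (∀ g, φ g a = a) → ∃ b, (∀ g, φ g b = b) ∧ IsCompl a b) :
    ComplementedLattice α := by
  obtain ⟨t, ht, hst⟩ := hcompl _ fun g => orderIso_map_sSup_isAtom (φ g)
  have htbot : t = ⊥ := by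
    by_contra hne
    obtain ⟨a, ha, hat⟩ := exists_isAtom_le_of_fixed hfin
      (fun a h => (hcompl a h).imp fun _ => And.right) ht hne
    exact ha.1 (le_bot_iff.1 (hst.disjoint (le_sSup ha) hat))
  exact complementedLattice_of_sSup_atoms_eq_top (eq_top_of_isCompl_bot (htbot ▸ hst))

theorem complementedLattice_of_orderIso_of_fixed_complemented {β : Type*} [Lattice β]
    [BoundedOrder β] (e : β ≃o α) {ψ : Γ →* (β ≃o β)}
    (hfin : ∀ b, (Set.range fun g => ψ g b).Finite)
    (hcompl : ∀ b, (∀ g, ψ g b = b) → ∃ c, (∀ g, ψ g c = c) ∧ IsCompl b c) :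
    ComplementedLattice β := by
  refine e.complementedLattice_iff.2 <| complementedLattice_of_fixed_complemented
    (φ := (orderIsoConj e).comp ψ) (fun a => ?_) fun a ha => ?_
  · exact (Set.range_comp e fun g => ψ g (e.symm a)) ▸ (hfin (e.symm a)).image e
  · obtain ⟨c, hc, hac⟩ := hcompl (e.symm a) fun g => e.injective <| by
      rw [e.apply_symm_apply]
      exact ha g
    refine ⟨e c, fun g => ?_, e.apply_symm_apply a ▸ e.isCompl hac⟩
    rw [MonoidHom.comp_apply, orderIsoConj_apply, e.symm_apply_apply, hc]

end LatticeAction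

section Subrepresentation

variable {R G V : Type*} [Monoid G] [AddCommGroup V]

theorem subrepresentation_isCompl_iff [Semiring R] [Module R V] {ρ : Representation R G V}
    {σ τ : Subrepresentation ρ} : IsCompl σ τ ↔ IsCompl σ.toSubmodule τ.toSubmodule := by
  simp only [isCompl_iff, disjoint_iff_inf_le, codisjoint_iff_le_sup]
  rfl

variable [CommRing R] [Module R V] {ρ : Representation R G V}

theorem isSemisimpleModule_asModule_iff :
    IsSemisimpleModule R[G] ρ.asModule ↔ ComplementedLattice (Subrepresentation ρ) := by
  rw [isSemisimpleModule_iff]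
  exact Subrepresentation.subrepresentationSubmoduleOrderIso.complementedLattice_iff.symm

theorem isComplemented_iff_exists_isProj {σ : Subrepresentation ρ} :
    IsComplemented σ ↔
      ∃ π : V →ₗ[R] V, ρ.IsIntertwiningMap ρ π ∧ LinearMap.IsProj σ.toSubmodule π := by
  constructor
  · rintro ⟨τ, hτ⟩
    rw [subrepresentation_isCompl_iff] at hτ
    have hproj : LinearMap.IsProj σ.toSubmodule (Submodule.projection _ _ hτ) :=
      ⟨Submodule.projection_apply_mem hτ, fun _ => Submodule.projection_apply_of_mem_left hτ⟩
    have hidem := LinearMap.IsProj.isIdempotentElem hproj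
    refine ⟨_, ⟨fun g v => LinearMap.congr_fun
      ((LinearMap.IsIdempotentElem.commute_iff (T := ρ g) hidem).2 ⟨?_, ?_⟩).eq v⟩, hproj⟩
    · rw [Submodule.range_projection]
      exact σ.apply_mem_toSubmodule g
    · rw [Submodule.ker_projection]
      exact τ.apply_mem_toSubmodule g
  · rintro ⟨π, hcomm, hproj⟩
    exact ⟨IntertwiningMap.ker ρ ρ
        (π.intertwiningMap_of_isIntertwiningMap ρ ρ hcomm.isIntertwining),
      subrepresentation_isCompl_iff.2 hproj.isCompl⟩

/-- A subrepresentation of `ρ`, viewed as a subrepresentation of the pullback of `ρ` along a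
homomorphism `f`; for the inclusion of a subgroup this is restriction. -/
def restrictSubrepresentation {H : Type*} [Monoid H] (f : H →* G) (σ : Subrepresentation ρ) :
    Subrepresentation (ρ.comp f : Representation R H V) where
  toSubmodule := σ.toSubmodule
  apply_mem_toSubmodule h := σ.apply_mem_toSubmodule (f h)

end Subrepresentation

section RelativeMaschke

variable {R G V : Type*} [CommRing R] [Group G] [AddCommGroup V] [Module R V]
  {ρ : Representation R G V} {H : Subgroup G}

theorem apply_eq_apply_of_mem_invariants {v : V}
    (hv : v ∈ invariants (ρ.comp H.subtype : Representation R H V)) {a b : G}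
    (hab : (a : G ⧸ H) = b) : ρ a v = ρ b v := by
  have hinv : ρ (a⁻¹ * b) v = v := hv ⟨a⁻¹ * b, QuotientGroup.eq.1 hab⟩
  rw [← mul_inv_cancel_left a b, map_mul, Module.End.mul_apply, hinv]

theorem sum_out_apply_mem_invariants [Fintype (G ⧸ H)] {v : V}
    (hv : v ∈ invariants (ρ.comp H.subtype : Representation R H V)) :
    ∑ q : G ⧸ H, ρ q.out v ∈ ρ.invariants := by
  intro g
  rw [map_sum]
  refine Fintype.sum_equiv (MulAction.toPerm g) _ _ fun q => ?_
  rw [← Module.End.mul_apply, ← map_mul]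
  refine apply_eq_apply_of_mem_invariants hv ?_
  rw [MulAction.toPerm_apply, QuotientGroup.out_eq', ← smul_eq_mul, MulAction.Quotient.coe_smul_out]

theorem isProj_linHom_apply {σ : Subrepresentation ρ} {π : V →ₗ[R] V}
    (hπ : LinearMap.IsProj σ.toSubmodule π) (g : G) :
    LinearMap.IsProj σ.toSubmodule (linHom ρ ρ g π) where
  map_mem v := σ.apply_mem_toSubmodule g (hπ.map_mem _)
  map_id v hv := by
    rw [linHom_apply, LinearMap.comp_apply, LinearMap.comp_apply,
      hπ.map_id _ (σ.apply_mem_toSubmodule g⁻¹ hv), self_inv_apply]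

theorem isProj_inverse_card_smul_sum {ι : Type*} [Fintype ι] (hι : IsUnit (Fintype.card ι : R))
    {p : Submodule R V} {π : ι → V →ₗ[R] V} (hπ : ∀ i, LinearMap.IsProj p (π i)) :
    LinearMap.IsProj p (Ring.inverse (Fintype.card ι : R) • ∑ i, π i) where
  map_mem v := by
    rw [LinearMap.smul_apply, LinearMap.sum_apply]
    exact p.smul_mem _ (p.sum_mem fun i _ => (hπ i).map_mem v)
  map_id v hv := by
    rw [LinearMap.smul_apply, LinearMap.sum_apply,
      Fintype.sum_congr _ _ fun i => (hπ i).map_id v hv, Finset.sum_const, Finset.card_univ,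
      ← Nat.cast_smul_eq_nsmul R, smul_smul, Ring.inverse_mul_cancel _ hι, one_smul]

theorem isComplemented_of_isComplemented_restrict [H.FiniteIndex] (hH : IsUnit (H.index : R))
    {σ : Subrepresentation ρ} (hσ : IsComplemented (restrictSubrepresentation H.subtype σ)) :
    IsComplemented σ := by
  have := Fintype.ofFinite (G ⧸ H)
  rw [Subgroup.index, Nat.card_eq_fintype_card] at hH
  obtain ⟨π, hπ, hproj⟩ := isComplemented_iff_exists_isProj.1 hσ
  have hinv : π ∈ invariants ((linHom ρ ρ).comp H.subtype : Representation R H (V →ₗ[R] V)) :=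
    (mem_linHom_invariants_iff_isIntertwining π).2 hπ
  have havg : Ring.inverse (Fintype.card (G ⧸ H) : R) • ∑ q : G ⧸ H, linHom ρ ρ q.out π ∈
      (linHom ρ ρ).invariants :=
    Submodule.smul_mem _ _ (sum_out_apply_mem_invariants hinv)
  exact isComplemented_iff_exists_isProj.2 ⟨_,
    (mem_linHom_invariants_iff_isIntertwining _).1 havg,
    isProj_inverse_card_smul_sum hH fun q => isProj_linHom_apply (σ := σ) hproj q.out⟩

end RelativeMaschke

section Clifford

variable {R G V : Type*} [CommRing R] [Group G] [AddCommGroup V] [Module R V]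

theorem apply_mem_toSubmodule_iff {ρ : Representation R G V} (σ : Subrepresentation ρ) (g : G)
    {v : V} : ρ g v ∈ σ.toSubmodule ↔ v ∈ σ.toSubmodule :=
  ⟨fun hv => ρ.inv_self_apply g v ▸ σ.apply_mem_toSubmodule g⁻¹ hv,
    fun hv => σ.apply_mem_toSubmodule g hv⟩

variable (ρ : Representation R G V) (H : Subgroup G) [H.Normal]

/-- The translate `g • σ` of an `H`-subrepresentation `σ` of a representation of `G`, for `H` normal
in `G`, encoded as the preimage of `σ` under `ρ g⁻¹`. -/
def translateSubrepresentation (g : G)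
    (σ : Subrepresentation (ρ.comp H.subtype : Representation R H V)) :
    Subrepresentation (ρ.comp H.subtype : Representation R H V) where
  toSubmodule := σ.toSubmodule.comap (ρ g⁻¹)
  apply_mem_toSubmodule h v hv := by
    have hconj : ρ g⁻¹ (ρ (h : G) v) = ρ (g⁻¹ * h * g) (ρ g⁻¹ v) := by
      simp only [← Module.End.mul_apply, ← map_mul, mul_inv_cancel_right]
    change ρ g⁻¹ (ρ (h : G) v) ∈ σ.toSubmodule
    rw [hconj]
    exact σ.apply_mem_toSubmodule
      ⟨g⁻¹ * h * g, Subgroup.Normal.conj_mem' inferInstance (h : G) h.2 g⟩ hv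

variable {ρ H}

theorem translateSubrepresentation_one
    (σ : Subrepresentation (ρ.comp H.subtype : Representation R H V)) :
    translateSubrepresentation ρ H 1 σ = σ := by
  ext v
  change ρ 1⁻¹ v ∈ σ.toSubmodule ↔ v ∈ σ.toSubmodule
  rw [inv_one, map_one, Module.End.one_apply]

theorem translateSubrepresentation_mul (g g' : G)
    (σ : Subrepresentation (ρ.comp H.subtype : Representation R H V)) :
    translateSubrepresentation ρ H (g * g') σ =
      translateSubrepresentation ρ H g (translateSubrepresentation ρ H g' σ) := by
  ext v
  change ρ (g * g')⁻¹ v ∈ σ.toSubmodule ↔ ρ g'⁻¹ (ρ g⁻¹ v) ∈ σ.toSubmodule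
  rw [mul_inv_rev, map_mul, Module.End.mul_apply]

theorem translateSubrepresentation_mono (g : G) : Monotone (translateSubrepresentation ρ H g) :=
  fun _ _ hle _ hv => hle hv

theorem translateSubrepresentation_of_mem {h : G} (hh : h ∈ H)
    (σ : Subrepresentation (ρ.comp H.subtype : Representation R H V)) :
    translateSubrepresentation ρ H h σ = σ :=
  Subrepresentation.ext <| Submodule.ext fun _ => apply_mem_toSubmodule_iff σ (⟨h, hh⟩⁻¹ : H)

theorem translateSubrepresentation_restrict (g : G) (σ : Subrepresentation ρ) :
    translateSubrepresentation ρ H g (restrictSubrepresentation H.subtype σ) =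
      restrictSubrepresentation H.subtype σ :=
  Subrepresentation.ext <| Submodule.ext fun _ => apply_mem_toSubmodule_iff σ g⁻¹

theorem exists_restrictSubrepresentation_eq_of_translate_eq
    {σ : Subrepresentation (ρ.comp H.subtype : Representation R H V)}
    (hσ : ∀ g, translateSubrepresentation ρ H g σ = σ) :
    ∃ τ : Subrepresentation ρ, restrictSubrepresentation H.subtype τ = σ := by
  refine ⟨⟨σ.toSubmodule, fun g v hv => ?_⟩, rfl⟩
  rw [← hσ g]
  change ρ g⁻¹ (ρ g v) ∈ σ.toSubmodule
  rwa [ρ.inv_self_apply]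

variable (ρ H)

/-- The action of `G` by translation on the lattice of `H`-subrepresentations. -/
def translateHom :
    G →* (Subrepresentation (ρ.comp H.subtype : Representation R H V) ≃o
      Subrepresentation (ρ.comp H.subtype : Representation R H V)) where
  toFun g := Equiv.toOrderIso
    { toFun := translateSubrepresentation ρ H g
      invFun := translateSubrepresentation ρ H g⁻¹
      left_inv := fun σ => by
        rw [← translateSubrepresentation_mul, inv_mul_cancel, translateSubrepresentation_one]
      right_inv := fun σ => by
        rw [← translateSubrepresentation_mul, mul_inv_cancel, translateSubrepresentation_one] }
    (translateSubrepresentation_mono g) (translateSubrepresentation_mono g⁻¹)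
  map_one' := RelIso.ext translateSubrepresentation_one
  map_mul' g g' := RelIso.ext (translateSubrepresentation_mul g g')

variable {ρ H}

theorem finite_range_translateHom_apply [H.FiniteIndex]
    (σ : Subrepresentation (ρ.comp H.subtype : Representation R H V)) :
    (Set.range fun g => translateHom ρ H g σ).Finite := by
  let φ := QuotientGroup.lift H (translateHom ρ H) fun _ hh =>
    RelIso.ext (translateSubrepresentation_of_mem hh)
  refine (Set.finite_range fun q : G ⧸ H => φ q σ).subset ?_
  rintro _ ⟨g, rfl⟩
  exact ⟨g, rfl⟩

theorem exists_isCompl_translateHom_fixed [ComplementedLattice (Subrepresentation ρ)]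
    {σ : Subrepresentation (ρ.comp H.subtype : Representation R H V)}
    (hσ : ∀ g, translateHom ρ H g σ = σ) :
    ∃ τ, (∀ g, translateHom ρ H g τ = τ) ∧ IsCompl σ τ := by
  obtain ⟨σ, rfl⟩ := exists_restrictSubrepresentation_eq_of_translate_eq hσ
  obtain ⟨τ, hτ⟩ := exists_isCompl σ
  have hsub : IsCompl σ.toSubmodule τ.toSubmodule := subrepresentation_isCompl_iff.1 hτ
  exact ⟨restrictSubrepresentation H.subtype τ, fun g => translateSubrepresentation_restrict g τ,
    subrepresentation_isCompl_iff.2 hsub⟩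

theorem isSemisimpleModule_restrict_of_isSemisimpleModule [H.FiniteIndex]
    (hρ : IsSemisimpleModule R[G] ρ.asModule) :
    IsSemisimpleModule R[H] (asModule (ρ.comp H.subtype : Representation R H V)) := by
  have := isSemisimpleModule_asModule_iff.1 hρ
  exact isSemisimpleModule_asModule_iff.2 <| complementedLattice_of_orderIso_of_fixed_complemented
    Subrepresentation.subrepresentationSubmoduleOrderIso finite_range_translateHom_apply
    fun _ => exists_isCompl_translateHom_fixed

end Clifford

theorem isSemisimpleModule_of_isSemisimpleModule_restrict {R G V : Type*} [CommRing R] [Group G]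
    [AddCommGroup V] [Module R V] {ρ : Representation R G V} {H : Subgroup G} [H.FiniteIndex]
    (hH : IsUnit (H.index : R))
    (hρ : IsSemisimpleModule R[H] (asModule (ρ.comp H.subtype : Representation R H V))) :
    IsSemisimpleModule R[G] ρ.asModule := by
  have := isSemisimpleModule_asModule_iff.1 hρ
  exact isSemisimpleModule_asModule_iff.2
    ⟨fun _ => isComplemented_of_isComplemented_restrict hH (exists_isCompl _)⟩

theorem stmt_5_general {R G V : Type*} [CommRing R] [Group G] (H : Subgroup G) [H.Normal]
    [H.FiniteIndex] (hH : IsUnit (H.index : R)) [AddCommGroup V] [Module R V]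
    (ρ : Representation R G V) :
    IsSemisimpleModule R[G] ρ.asModule ↔
      IsSemisimpleModule R[H] (asModule (ρ.comp H.subtype : Representation R H V)) :=
  ⟨isSemisimpleModule_restrict_of_isSemisimpleModule,
    isSemisimpleModule_of_isSemisimpleModule_restrict hH⟩

/-- [HL15b, Lemma 3.6]: let `F` be a field, `G` a finite group, `H ⊴ G` with
`[G:H]` nonzero in `F`, and `V` a finite-dimensional `F`-representation of `G`.
Then `V` is semisimple over `G` iff its restriction to `H` is semisimple. -/
theorem stmt_5 (F : Type*) [Field F] (G : Type*) [Group G] [Finite G]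
    (H : Subgroup G) [H.Normal] (hind : (H.index : F) ≠ 0)
    (V : Type*) [AddCommGroup V] [Module F V] [FiniteDimensional F V]
    (ρ : Representation F G V) :
    IsSemisimpleModule (MonoidAlgebra F G) ρ.asModule ↔
      IsSemisimpleModule (MonoidAlgebra F H)
        (Representation.asModule (ρ.comp H.subtype : Representation F H V)) :=
  stmt_5_general H hind.isUnit ρ
end

section
/- Let p be a prime, n a positive integer, and Γ a subgroup of GL_n(ℤ_p), where ℤ_p is the ring of p-adic integers. Let Γ act on ℚ_p^n via the inclusion GL_n(ℤ_p) ⊆ GL_n(ℚ_p), and on 𝔽_p^n via the entrywise reduction homomorphism GL_n(ℤ_p) → GL_n(𝔽_p). Then dim_{𝔽_p} (𝔽_p^n)^Γ ≥ dim_{ℚ_p} (ℚ_p^n)^Γ, where (·)^Γ denotes the subspace of vectors fixed by every element of Γ. -/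
/-!
Vectors fixed by every matrix `A i` form the kernel of the single matrix whose block rows are the
`A i - 1`. Applying a ring homomorphism to the entries can create linear dependencies but not
destroy them: a minor that survives reduction modulo `p` was already nonzero over `ℤ_p`, hence over
`ℚ_p`. So the rank of that block matrix can only drop on reduction, and by rank-nullity its kernel
can only grow.
-/

open Module

section Minors

variable {m n F : Type*} [Fintype n] [Field F]

theorem exists_det_submatrix_ne_zero_of_linearIndependent_col [DecidableEq n] {A : Matrix m n F}
    (hA : LinearIndependent F A.col) : ∃ r : n → m, (A.submatrix r id).det ≠ 0 := by
  have row_span : Submodule.span F (Set.range A.row) = ⊤ :=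
    span_flip_eq_top_iff_linearIndependent.mpr hA
  obtain ⟨κ, a, -, a_span, a_indep⟩ := exists_linearIndependent' F A.row
  let rowBasis : Basis κ F (n → F) := Basis.mk a_indep (a_span.trans row_span).ge
  let e : κ ≃ n := rowBasis.indexEquiv (Pi.basisFun F n)
  have rows_indep : LinearIndependent F (A.submatrix (a ∘ e.symm) id).row :=
    a_indep.comp e.symm e.symm.injective
  have det_isUnit := (Matrix.isUnit_iff_isUnit_det _).mp
    (Matrix.linearIndependent_rows_iff_isUnit.mp rows_indep)
  exact ⟨a ∘ e.symm, det_isUnit.ne_zero⟩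

theorem exists_linearIndependent_col_submatrix (A : Matrix m n F) :
    ∃ c : Fin A.rank → n, LinearIndependent F (A.submatrix id c).col := by
  rw [A.rank_eq_finrank_span_cols]
  have : Module.Finite F (Submodule.span F (Set.range A.col)) :=
    .span_of_finite F (Set.finite_range A.col)
  obtain ⟨v, v_mem, -, v_indep⟩ := Submodule.exists_fun_fin_finrank_span_eq F (Set.range A.col)
  choose c hc using v_mem
  exact ⟨c, (funext hc : (A.submatrix id c).col = v) ▸ v_indep⟩

theorem exists_det_submatrix_ne_zero (A : Matrix m n F) :
    ∃ (r : Fin A.rank → m) (c : Fin A.rank → n), (A.submatrix r c).det ≠ 0 := by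
  obtain ⟨c, c_indep⟩ := exists_linearIndependent_col_submatrix A
  obtain ⟨r, hr⟩ := exists_det_submatrix_ne_zero_of_linearIndependent_col c_indep
  exact ⟨r, c, hr⟩

end Minors

section Rank

variable {R l m n : Type*} [CommRing R] [IsDomain R] [Fintype n]

theorem card_le_rank_of_det_submatrix_ne_zero [Fintype l] [DecidableEq l] {A : Matrix m n R}
    {r : l → m} {c : l → n} (h : (A.submatrix r c).det ≠ 0) : Fintype.card l ≤ A.rank :=
  (Matrix.rank_of_det_ne_zero h).ge.trans (A.rank_submatrix_le r c)

theorem rank_add_finrank_ker_mulVecLin (A : Matrix m n R) :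
    A.rank + finrank R A.mulVecLin.ker = Fintype.card n := by
  rw [Matrix.rank, ← A.mulVecLin.quotKerEquivRange.finrank_eq,
    Submodule.finrank_quotient_add_finrank, finrank_fintype_fun_eq_card]

end Rank

section StackRows

variable {R ι m n : Type*}

/-- The block matrix with block rows `A i`, used to treat a possibly infinite family of linear
systems as one: its rows are indexed by `ι × m`. -/
def stackRows (A : ι → Matrix m n R) : Matrix (ι × m) n R :=
  .of fun x ↦ A x.1 x.2

theorem ker_mulVecLin_stackRows [CommSemiring R] [Fintype n] (A : ι → Matrix m n R) :
    (stackRows A).mulVecLin.ker = ⨅ i, (A i).mulVecLin.ker := by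
  ext v
  simp only [LinearMap.mem_ker, Submodule.mem_iInf, Matrix.mulVecLin_apply, funext_iff, Prod.forall]
  rfl

end StackRows

section RingHom

variable {R K k ι m n : Type*} [CommRing R] [CommRing K] [IsDomain K] [Field k] [Fintype n]

theorem rank_map_le_rank_map_of_ker_le {g : R →+* K} {f : R →+* k}
    (h : RingHom.ker g ≤ RingHom.ker f) (A : Matrix m n R) :
    (A.map f).rank ≤ (A.map g).rank := by
  obtain ⟨r, c, hf⟩ := exists_det_submatrix_ne_zero (A.map f)
  have hg : ((A.map g).submatrix r c).det ≠ 0 := by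
    rw [Matrix.submatrix_map, ← RingHom.mapMatrix_apply, ← RingHom.map_det] at hf ⊢
    exact mt (@h _) hf
  simpa only [Fintype.card_fin] using card_le_rank_of_det_submatrix_ne_zero hg

theorem finrank_ker_mulVecLin_map_le_of_ker_le {g : R →+* K} {f : R →+* k}
    (h : RingHom.ker g ≤ RingHom.ker f) (A : Matrix m n R) :
    finrank K (A.map g).mulVecLin.ker ≤ finrank k (A.map f).mulVecLin.ker := by
  have rank_nullity_g := rank_add_finrank_ker_mulVecLin (A.map g)
  have rank_nullity_f := rank_add_finrank_ker_mulVecLin (A.map f)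
  have rank_le := rank_map_le_rank_map_of_ker_le h A
  omega

theorem finrank_iInf_ker_mulVecLin_map_le_of_ker_le {g : R →+* K} {f : R →+* k}
    (h : RingHom.ker g ≤ RingHom.ker f) (A : ι → Matrix m n R) :
    finrank K ↥(⨅ i, ((A i).map g).mulVecLin.ker) ≤
      finrank k ↥(⨅ i, ((A i).map f).mulVecLin.ker) := by
  rw [← ker_mulVecLin_stackRows, ← ker_mulVecLin_stackRows]
  exact finrank_ker_mulVecLin_map_le_of_ker_le h (stackRows A)

theorem iInf_ker_mulVecLin_map_sub_one {S : Type*} [CommRing S] [DecidableEq n] (f : R →+* S)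
    (A : ι → Matrix n n R) :
    ⨅ i, ((A i - 1).map f).mulVecLin.ker =
      ⨅ i, LinearMap.ker (((A i).map f).mulVecLin - LinearMap.id) := by
  refine iInf_congr fun i ↦ congrArg LinearMap.ker (LinearMap.ext fun v ↦ ?_)
  simp [Matrix.map_sub]

theorem stmt_9_general {g : R →+* K} {f : R →+* k} (h : RingHom.ker g ≤ RingHom.ker f)
    (A : ι → Matrix n n R) :
    finrank K ↥(⨅ i, LinearMap.ker (((A i).map g).mulVecLin - LinearMap.id)) ≤
      finrank k ↥(⨅ i, LinearMap.ker (((A i).map f).mulVecLin - LinearMap.id)) := by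
  classical
  rw [← iInf_ker_mulVecLin_map_sub_one, ← iInf_ker_mulVecLin_map_sub_one]
  exact finrank_iInf_ker_mulVecLin_map_le_of_ker_le h fun i ↦ A i - 1

end RingHom

/-- Inequality (2.1) of the paper: for a subgroup `Γ ⊆ GL_n(ℤ_p)`, the dimension of
the fixed space of `Γ` on `𝔽_p^n` (via reduction mod `p`) is at least the dimension
of the fixed space of `Γ` on `ℚ_p^n` (via the inclusion `ℤ_p ⊆ ℚ_p`). -/
theorem stmt_9 (p : ℕ) [Fact p.Prime] (n : ℕ) (hn : 0 < n)
    (Γ : Subgroup (GL (Fin n) ℤ_[p])) :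
    Module.finrank ℚ_[p]
      ↥(⨅ γ : Γ, LinearMap.ker
          ((Matrix.GeneralLinearGroup.map (PadicInt.Coe.ringHom (p := p))
              (γ : GL (Fin n) ℤ_[p]) : Matrix (Fin n) (Fin n) ℚ_[p]).mulVecLin
            - LinearMap.id)) ≤
    Module.finrank (ZMod p)
      ↥(⨅ γ : Γ, LinearMap.ker
          ((Matrix.GeneralLinearGroup.map (PadicInt.toZMod (p := p))
              (γ : GL (Fin n) ℤ_[p]) : Matrix (Fin n) (Fin n) (ZMod p)).mulVecLin
            - LinearMap.id)) := by
  have coe_ker : RingHom.ker (PadicInt.Coe.ringHom (p := p)) = ⊥ :=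
    (RingHom.injective_iff_ker_eq_bot _).mp Subtype.val_injective
  exact stmt_9_general (coe_ker.trans_le bot_le) fun γ : Γ ↦
    ((γ : GL (Fin n) ℤ_[p]) : Matrix (Fin n) (Fin n) ℤ_[p])
end
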